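/- Let ℓ be an odd prime different from char(K) with ζ_ℓ ∈ K, suppose char(K) ≠ 2, and set W'_ℓ := ⟨W_ℓ, ζ_4⟩ and Γ'_{ℓ,E} := Γ_ℓ ∩ K(W'_ℓ)^×. Then K(Γ_ℓ) ∩ K(W'_ℓ) = K(Γ'_{ℓ,E}) and [K(⟨K^×, W'_ℓ, Γ_ℓ⟩):K] = |Γ_ℓ : K^×| · [K(W'_ℓ):K] / |Γ'_{ℓ,E} : K^×|. -/

import Mathlib

noncomputable section

open IntermediateField

/-- `K^×` viewed as a subgroup of the units of the algebraic closure of `K`. -/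
def baseUnits (K : Type*) [Field K] : Subgroup (AlgebraicClosure K)ˣ :=
  (Units.map (algebraMap K (AlgebraicClosure K)).toMonoidHom).range

/-- The subgroup of `(AlgebraicClosure K)ˣ` of elements whose `m`-th power lies in `K^×`. -/
def radGroup (K : Type*) [Field K] (m : ℕ) : Subgroup (AlgebraicClosure K)ˣ where
  carrier := {x | ∃ y : K, algebraMap K (AlgebraicClosure K) y = (x : AlgebraicClosure K) ^ m}
  one_mem' := ⟨1, by simp⟩
  mul_mem' := by
    rintro a b ⟨y, hy⟩ ⟨z, hz⟩
    exact ⟨y * z, by rw [map_mul, hy, hz, Units.val_mul, mul_pow]⟩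
  inv_mem' := by
    rintro a ⟨y, hy⟩
    refine ⟨y⁻¹, ?_⟩
    rw [map_inv₀, hy, Units.val_inv_eq_inv_val, inv_pow]

lemma radGroup_le (K : Type*) [Field K] {m k : ℕ} :
    radGroup K m ≤ radGroup K (m * k) := by
  rintro x ⟨y, hy⟩
  exact ⟨y ^ k, by rw [map_pow, hy, ← pow_mul]⟩

/-- The group `√[ℓ^∞]{K^×}` of radicals of `ℓ`-power order over `K`. -/
def radInf (K : Type*) [Field K] (ℓ : ℕ) : Subgroup (AlgebraicClosure K)ˣ where
  carrier := {x | ∃ n : ℕ, x ∈ radGroup K (ℓ ^ n)}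
  one_mem' := ⟨0, one_mem _⟩
  mul_mem' := by
    rintro a b ⟨n, ha⟩ ⟨m, hb⟩
    refine ⟨n + m, mul_mem ?_ ?_⟩
    · have h : radGroup K (ℓ ^ n) ≤ radGroup K (ℓ ^ (n + m)) := by
        rw [pow_add]; exact radGroup_le K
      exact h ha
    · have h : radGroup K (ℓ ^ m) ≤ radGroup K (ℓ ^ (n + m)) := by
        rw [add_comm, pow_add]; exact radGroup_le K
      exact h hb
  inv_mem' := by
    rintro a ⟨n, ha⟩
    exact ⟨n, inv_mem ha⟩

/-- The units of the algebraic closure lying in an intermediate field `F`, as a subgroup. -/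
def unitsIn {K : Type*} [Field K] (F : IntermediateField K (AlgebraicClosure K)) :
    Subgroup (AlgebraicClosure K)ˣ where
  carrier := {x | (x : AlgebraicClosure K) ∈ F}
  one_mem' := by
    show ((1 : (AlgebraicClosure K)ˣ) : AlgebraicClosure K) ∈ F
    simpa using one_mem F
  mul_mem' := by
    intro a b ha hb
    show ((a * b : (AlgebraicClosure K)ˣ) : AlgebraicClosure K) ∈ F
    rw [Units.val_mul]
    exact mul_mem ha hb
  inv_mem' := by
    intro x hx
    show ((x⁻¹ : (AlgebraicClosure K)ˣ) : AlgebraicClosure K) ∈ F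
    rw [Units.val_inv_eq_inv_val]
    exact inv_mem hx

/-- `K(ζ_{2𝒫})`: the extension of `K` generated by all roots of unity whose order is `4` or
an odd prime, and not divisible by the characteristic of `K`. -/
def cyclo2P (K : Type*) [Field K] : IntermediateField K (AlgebraicClosure K) :=
  IntermediateField.adjoin K
    {x : AlgebraicClosure K |
      ∃ n : ℕ, (n = 4 ∨ (n.Prime ∧ Odd n)) ∧ ¬ (ringChar K ∣ n) ∧ IsPrimitiveRoot x n}

/-- The set of roots of unity of order exactly `n` in the algebraic closure of `K`. -/
def primRoots (K : Type*) [Field K] (n : ℕ) : Set (AlgebraicClosure K) :=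
  {x | IsPrimitiveRoot x n}

/-- The set of roots of unity of order `ℓ^n` for `n ≤ t` (all of them if `t = ∞`). -/
def pPowRoots (K : Type*) [Field K] (ℓ : ℕ) (t : ℕ∞) : Set (AlgebraicClosure K) :=
  {x | ∃ n : ℕ, (n : ℕ∞) ≤ t ∧ IsPrimitiveRoot x (ℓ ^ n)}

/-- The set of units that are roots of unity of order `ℓ^n` for `n ≤ t`. -/
def pPowRootsUnits (K : Type*) [Field K] (ℓ : ℕ) (t : ℕ∞) : Set (AlgebraicClosure K)ˣ :=
  {x | ∃ n : ℕ, (n : ℕ∞) ≤ t ∧ IsPrimitiveRoot (x : AlgebraicClosure K) (ℓ ^ n)}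


section KummerHelpers

open Polynomial

variable {F Ω : Type*} [Field F] [Field Ω] [Algebra F Ω]

/-- An `ℓ`-th root not in `F` of an element of `F` has minimal polynomial `X ^ ℓ - c`, when `F`
contains a primitive `ℓ`-th root of unity. -/
lemma kum_not_pow {ℓ : ℕ} (hℓ : ℓ.Prime) {z : F} (hz : IsPrimitiveRoot z ℓ)
    {a : Ω} (ha : a ∉ (algebraMap F Ω).range) {c : F} (hc : a ^ ℓ = algebraMap F Ω c) :
    ∀ b : F, b ^ ℓ ≠ c := by
  rintro b rfl
  have hz' := hz.map_of_injective (algebraMap F Ω).injective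
  have : NeZero ℓ := ⟨hℓ.ne_zero⟩
  apply ha
  by_cases hb : b = 0
  · subst hb
    rw [zero_pow hℓ.ne_zero, map_zero] at hc
    exact ⟨0, by rw [map_zero, eq_zero_of_pow_eq_zero hc]⟩
  have hb' : algebraMap F Ω b ≠ 0 := by simpa using hb
  obtain ⟨i, -, hi⟩ := hz'.eq_pow_of_pow_eq_one (ξ := a / algebraMap F Ω b) (by
    rw [div_pow, hc, map_pow, div_self (pow_ne_zero _ hb')])
  refine ⟨z ^ i * b, ?_⟩
  rw [map_mul, map_pow, hi, div_mul_cancel₀ _ hb']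

lemma kum_minpoly {ℓ : ℕ} (hℓ : ℓ.Prime) (h2 : ℓ ≠ 2) (n : ℕ)
    {a : Ω} {c : F} (hc : a ^ (ℓ ^ n) = algebraMap F Ω c) (hne : ∀ b : F, b ^ ℓ ≠ c) :
    minpoly F a = X ^ (ℓ ^ n) - C c := by
  symm
  apply minpoly.eq_of_irreducible_of_monic (X_pow_sub_C_irreducible_of_prime_pow hℓ h2 n hne)
  · simp [hc]
  · exact monic_X_pow_sub_C _ (pow_ne_zero _ hℓ.ne_zero)

lemma kum_finrank {ℓ : ℕ} (hℓ : ℓ.Prime) (h2 : ℓ ≠ 2) (n : ℕ)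
    {a : Ω} {c : F} (hc : a ^ (ℓ ^ n) = algebraMap F Ω c) (hne : ∀ b : F, b ^ ℓ ≠ c) :
    IsIntegral F a ∧ Module.finrank F (IntermediateField.adjoin F {a}) = ℓ ^ n := by
  have h := kum_minpoly hℓ h2 n hc hne
  have hi : IsIntegral F a := by
    by_contra hi
    rw [minpoly.eq_zero hi] at h
    exact X_pow_sub_C_ne_zero (pow_pos hℓ.pos n) c h.symm
  refine ⟨hi, ?_⟩
  rw [IntermediateField.adjoin.finrank hi, h, natDegree_X_pow_sub_C]

/-- An `ℓ`-power radical in a degree-`ℓ` radical extension is an `ℓ`-th root. -/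
lemma kum_pow_mem {ℓ : ℕ} (hℓ : ℓ.Prime) (h2 : ℓ ≠ 2) {z : F} (hz : IsPrimitiveRoot z ℓ)
    {a : Ω} (ha : a ∉ (algebraMap F Ω).range) (hc : a ^ ℓ ∈ (algebraMap F Ω).range)
    {b : Ω} (hb : b ∈ IntermediateField.adjoin F {a}) :
    ∀ n : ℕ, b ^ (ℓ ^ n) ∈ (algebraMap F Ω).range → b ^ ℓ ∈ (algebraMap F Ω).range := by
  intro n
  induction n with
  | zero => intro h; rw [pow_zero, pow_one] at h; exact pow_mem h _
  | succ n ih =>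
    intro h
    by_cases hn : b ^ (ℓ ^ n) ∈ (algebraMap F Ω).range
    · exact ih hn
    obtain ⟨d, hd⟩ := h
    have hne : ∀ e : F, e ^ ℓ ≠ d := by
      apply kum_not_pow hℓ hz hn
      rw [← pow_mul, ← pow_succ, hd]
    obtain ⟨-, hdeg⟩ := kum_finrank hℓ h2 (n + 1) hd.symm hne
    obtain ⟨c, hc⟩ := hc
    obtain ⟨hia, hdega⟩ := kum_finrank (a := a) hℓ h2 1 (by rw [pow_one, hc])
      (kum_not_pow hℓ hz ha hc.symm)
    have := IntermediateField.adjoin.finiteDimensional hia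
    have hle : IntermediateField.adjoin F {b} ≤ IntermediateField.adjoin F {a} := by
      simpa using hb
    have hd2 := IntermediateField.finrank_le_of_le_right hle
    rw [hdeg, hdega] at hd2
    have := (Nat.pow_le_pow_iff_right hℓ.one_lt).1 hd2
    obtain rfl : n = 0 := by omega
    exact ⟨d, by rw [hd, zero_add, pow_one]⟩

/-- An `ℓ`-th root of an element of `F` lying in `F(a)` is of the form `c * a ^ i`. -/
lemma kum_eq_mul {ℓ : ℕ} (hℓ : ℓ.Prime) (h2 : ℓ ≠ 2) {z : F} (hz : IsPrimitiveRoot z ℓ)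
    {a : Ω} (ha : a ∉ (algebraMap F Ω).range) (hc : a ^ ℓ ∈ (algebraMap F Ω).range)
    {b : Ω} (hb : b ∈ IntermediateField.adjoin F {a}) (hb0 : b ≠ 0)
    (hbl : b ^ ℓ ∈ (algebraMap F Ω).range) :
    ∃ (i : ℕ) (e : F), b = algebraMap F Ω e * a ^ i := by
  obtain ⟨c, hc⟩ := hc
  obtain ⟨d, hd⟩ := hbl
  have : NeZero ℓ := ⟨hℓ.ne_zero⟩
  have hne := kum_not_pow hℓ hz ha hc.symm
  have hmin := kum_minpoly (a := a) hℓ h2 1 (by rw [pow_one, hc]) hne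
  rw [pow_one] at hmin
  have hia := (kum_finrank (a := a) hℓ h2 1 (by rw [pow_one, hc]) hne).1
  have hmon := minpoly.monic hia
  -- write `b` as a polynomial of degree `< ℓ` in `a`
  obtain ⟨p, hp, hpd⟩ : ∃ p : F[X], aeval a p = b ∧ p.degree < (minpoly F a).degree := by
    rw [← IntermediateField.mem_toSubalgebra,
      IntermediateField.adjoin_simple_toSubalgebra_of_isAlgebraic hia.isAlgebraic,
      Algebra.adjoin_singleton_eq_range_aeval] at hb
    obtain ⟨p, hp⟩ := hb
    refine ⟨p %ₘ minpoly F a, ?_, degree_modByMonic_lt _ hmon⟩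
    rw [aeval_modByMonic_eq_self_of_root (minpoly.aeval F a)]
    exact hp
  have hza : aeval (algebraMap F Ω z * a) (minpoly F a) = 0 := by
    rw [hmin]
    rw [map_sub, map_pow, aeval_X, aeval_C, mul_pow, ← map_pow, hz.pow_eq_one, map_one, one_mul,
      hc, sub_self]
  have hpow : (aeval (algebraMap F Ω z * a) p) ^ ℓ = algebraMap F Ω d := by
    have h1 : minpoly F a ∣ p ^ ℓ - C d := minpoly.dvd F a (by simp [hp, hd])
    have h3 := aeval_eq_zero_of_dvd_aeval_eq_zero h1 hza
    simpa [sub_eq_zero] using h3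
  obtain ⟨j, hj, hjz⟩ := (hz.map_of_injective (algebraMap F Ω).injective).eq_pow_of_pow_eq_one
    (ξ := aeval (algebraMap F Ω z * a) p / b) (by
      rw [div_pow, hpow, hd, div_self (pow_ne_zero _ hb0)])
  have hjz' : aeval (algebraMap F Ω z * a) p = algebraMap F Ω z ^ j * b := by
    rw [hjz, div_mul_cancel₀ _ hb0]
  have hq : p.comp (C z * X) - C (z ^ j) * p = 0 := by
    by_contra hq0
    have hroot : aeval a (p.comp (C z * X) - C (z ^ j) * p) = 0 := by
      rw [map_sub, aeval_comp, map_mul, map_mul, aeval_C, aeval_C, aeval_X, hjz', hp, map_pow,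
        sub_self]
    have h4 := minpoly.degree_le_of_ne_zero F a hq0 hroot
    have h5 : (p.comp (C z * X) - C (z ^ j) * p).degree < (minpoly F a).degree := by
      rw [hmin, degree_X_pow_sub_C hℓ.pos, degree_lt_iff_coeff_zero] at *
      intro i hi
      rw [coeff_sub, comp_C_mul_X_coeff, coeff_C_mul, hpd i hi, zero_mul, mul_zero, sub_zero]
    exact absurd h5 (not_lt.2 h4)
  have hco : ∀ i, i ≠ j → p.coeff i = 0 := by
    intro i hij
    by_cases hi : i < ℓ
    · have h6 := congrArg (fun q => q.coeff i) hq
      simp only [coeff_sub, comp_C_mul_X_coeff, coeff_C_mul, coeff_zero] at h6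
      have h7 : p.coeff i * (z ^ i - z ^ j) = 0 := by linear_combination h6
      rcases mul_eq_zero.1 h7 with h | h
      · exact h
      · exact absurd (hz.pow_inj hi hj (sub_eq_zero.1 h)) hij
    · apply coeff_eq_zero_of_degree_lt
      refine hpd.trans_le ?_
      rw [hmin, degree_X_pow_sub_C hℓ.pos]
      exact_mod_cast not_lt.1 hi
  refine ⟨j, p.coeff j, ?_⟩
  have : p = C (p.coeff j) * X ^ j := by
    ext i
    rw [coeff_C_mul, coeff_X_pow]
    split_ifs with h
    · rw [h, mul_one]
    · rw [mul_zero, hco i h]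
  rw [← hp]
  conv_lhs => rw [this]
  simp

end KummerHelpers

section KneserHelpers

variable {K : Type*} [Field K]

lemma mem_unitsIn {F : IntermediateField K (AlgebraicClosure K)} {x : (AlgebraicClosure K)ˣ} :
    x ∈ unitsIn F ↔ (x : AlgebraicClosure K) ∈ F := Iff.rfl

lemma unitsIn_mono {F E : IntermediateField K (AlgebraicClosure K)} (h : F ≤ E) :
    unitsIn F ≤ unitsIn E := fun _ hx => h hx

lemma unitsIn_bot : unitsIn (⊥ : IntermediateField K (AlgebraicClosure K)) = baseUnits K := by
  ext x
  rw [mem_unitsIn, IntermediateField.mem_bot]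
  constructor
  · rintro ⟨y, hy⟩
    have hy0 : y ≠ 0 := by
      rintro rfl
      rw [map_zero] at hy
      exact x.ne_zero hy.symm
    exact ⟨Units.mk0 y hy0, Units.ext hy⟩
  · rintro ⟨y, rfl⟩
    exact ⟨y, rfl⟩

lemma adjoin_val_le_iff {Γ : Subgroup (AlgebraicClosure K)ˣ}
    {F : IntermediateField K (AlgebraicClosure K)} :
    IntermediateField.adjoin K (Units.val '' (Γ : Set (AlgebraicClosure K)ˣ)) ≤ F ↔
      Γ ≤ unitsIn F := by
  rw [IntermediateField.adjoin_le_iff, Set.image_subset_iff]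
  rfl

lemma le_of_unitsIn_le {F E : IntermediateField K (AlgebraicClosure K)}
    (h : unitsIn F ≤ unitsIn E) : F ≤ E := by
  intro x hx
  by_cases h0 : x = 0
  · subst h0; exact zero_mem E
  · exact h (show Units.mk0 x h0 ∈ unitsIn F from hx)

lemma le_unitsIn_adjoin (Γ : Subgroup (AlgebraicClosure K)ˣ) :
    Γ ≤ unitsIn (IntermediateField.adjoin K (Units.val '' (Γ : Set (AlgebraicClosure K)ˣ))) :=
  adjoin_val_le_iff.1 le_rfl

/-- Kneser's theorem for radical groups of odd prime power index. -/
lemma kneser {ℓ : ℕ} (hℓ : ℓ.Prime) (h2 : ℓ ≠ 2) {z : K} (hz : IsPrimitiveRoot z ℓ) (m : ℕ) :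
    ∀ (F : IntermediateField K (AlgebraicClosure K)) (Γ : Subgroup (AlgebraicClosure K)ˣ),
      unitsIn F ≤ Γ → (unitsIn F).relIndex Γ = ℓ ^ m →
      IntermediateField.relfinrank F (IntermediateField.adjoin K
        (Units.val '' (Γ : Set (AlgebraicClosure K)ˣ))) = ℓ ^ m := by
  induction m with
  | zero =>
    intro F Γ hF hi
    rw [pow_zero] at hi ⊢
    rw [IntermediateField.relfinrank_eq_one_iff, adjoin_val_le_iff]
    exact Subgroup.relIndex_eq_one.1 hi
  | succ m ih =>
    intro F Γ hF hi
    have hzF : IsPrimitiveRoot (algebraMap K F z) ℓ :=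
      hz.map_of_injective (algebraMap K F).injective
    have hrange : ∀ x : AlgebraicClosure K,
        x ∈ (algebraMap F (AlgebraicClosure K)).range ↔ x ∈ F := by
      intro x
      exact ⟨fun ⟨y, hy⟩ => hy ▸ y.2, fun h => ⟨⟨x, h⟩, rfl⟩⟩
    -- every element of `Γ` is a radical
    have hrad : ∀ b ∈ Γ, b ^ (ℓ ^ (m + 1)) ∈ unitsIn F := by
      intro b hb
      have := Subgroup.pow_index_mem ((unitsIn F).subgroupOf Γ) ⟨b, hb⟩
      rw [← Subgroup.relIndex, hi] at this
      exact this
    -- an element of order `ℓ`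
    obtain ⟨a, haΓ, haF, hal⟩ : ∃ a ∈ Γ, a ∉ unitsIn F ∧ a ^ ℓ ∈ unitsIn F := by
      have : Fact ℓ.Prime := ⟨hℓ⟩
      have hcard : Nat.card (Γ ⧸ (unitsIn F).subgroupOf Γ) = ℓ ^ (m + 1) := hi
      have : Finite (Γ ⧸ (unitsIn F).subgroupOf Γ) :=
        Nat.finite_of_card_ne_zero (by rw [hcard]; exact pow_ne_zero _ hℓ.ne_zero)
      obtain ⟨x, hx⟩ := exists_prime_orderOf_dvd_card' (G := Γ ⧸ (unitsIn F).subgroupOf Γ) ℓ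
        (by rw [hcard]; exact dvd_pow_self _ (Nat.succ_ne_zero m))
      obtain ⟨⟨a, ha⟩, rfl⟩ := QuotientGroup.mk_surjective x
      refine ⟨a, ha, ?_, ?_⟩
      · intro h
        have h1 : ((⟨a, ha⟩ : Γ) : Γ ⧸ (unitsIn F).subgroupOf Γ) = 1 :=
          (QuotientGroup.eq_one_iff _).2 h
        rw [h1, orderOf_one] at hx
        exact hℓ.one_lt.ne hx
      · have h1 := pow_orderOf_eq_one ((⟨a, ha⟩ : Γ) : Γ ⧸ (unitsIn F).subgroupOf Γ)
        rw [hx, ← QuotientGroup.mk_pow, QuotientGroup.eq_one_iff] at h1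
        exact h1
    have haF' : (a : AlgebraicClosure K) ∉ (algebraMap F (AlgebraicClosure K)).range :=
      fun h => haF ((hrange _).1 h)
    have hal' : (a : AlgebraicClosure K) ^ ℓ ∈ (algebraMap F (AlgebraicClosure K)).range := by
      rw [hrange]
      have := mem_unitsIn.1 hal
      rwa [Units.val_pow_eq_pow_val] at this
    set F1 : IntermediateField F (AlgebraicClosure K) :=
      IntermediateField.adjoin F {(a : AlgebraicClosure K)} with hF1
    set F' : IntermediateField K (AlgebraicClosure K) := F1.restrictScalars K with hF'
    have hFF' : F ≤ F' := by
      intro x hx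
      exact F1.algebraMap_mem ⟨x, hx⟩
    have haF1 : a ∈ unitsIn F' :=
      IntermediateField.mem_adjoin_simple_self F (a : AlgebraicClosure K)
    have hdeg : IntermediateField.relfinrank F F' = ℓ := by
      obtain ⟨c, hc⟩ := hal'
      have := (kum_finrank (a := (a : AlgebraicClosure K)) hℓ h2 1 (by rw [pow_one, hc])
        (kum_not_pow hℓ hzF haF' hc.symm)).2
      rw [pow_one] at this
      rw [IntermediateField.relfinrank_eq_finrank_of_le hFF']
      exact this
    -- the intersection of `Γ` with the units of `F'`
    have hinf : unitsIn F' ⊓ Γ = unitsIn F ⊔ Subgroup.zpowers a := by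
      apply le_antisymm
      · rintro b ⟨hb1, hb2⟩
        have hb3 := mem_unitsIn.1 (hrad b hb2)
        rw [Units.val_pow_eq_pow_val, ← hrange] at hb3
        have hb4 := kum_pow_mem hℓ h2 hzF haF' hal' hb1 _ hb3
        obtain ⟨i, e, he⟩ := kum_eq_mul hℓ h2 hzF haF' hal' hb1 b.ne_zero hb4
        have hmem : b * (a ^ i)⁻¹ ∈ unitsIn F := by
          rw [mem_unitsIn, Units.val_mul, he, ← Units.val_pow_eq_pow_val, Units.mul_inv_cancel_right]
          exact e.2
        have hbe : b = b * (a ^ i)⁻¹ * a ^ i := by group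
        rw [hbe]
        exact Subgroup.mul_mem_sup hmem (pow_mem (Subgroup.mem_zpowers a) i)
      · refine sup_le (le_inf (unitsIn_mono hFF') hF) ?_
        rw [Subgroup.zpowers_le]
        exact ⟨haF1, haΓ⟩
    have hidx1 : (unitsIn F).relIndex (unitsIn F' ⊓ Γ) = ℓ := by
      have : Fact ℓ.Prime := ⟨hℓ⟩
      have hk := Subgroup.relIndex_ker (QuotientGroup.mk' (unitsIn F)) (K := Subgroup.zpowers a)
      rw [QuotientGroup.ker_mk', MonoidHom.map_zpowers, Nat.card_zpowers] at hk
      rw [hinf, Subgroup.relIndex_sup_left, hk]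
      apply orderOf_eq_prime
      · rw [← map_pow]
        exact (QuotientGroup.eq_one_iff _).2 hal
      · intro h
        exact haF ((QuotientGroup.eq_one_iff _).1 h)
    have hidx2 : (unitsIn F').relIndex (Γ ⊔ unitsIn F') = ℓ ^ m := by
      rw [Subgroup.relIndex_sup_right, ← Subgroup.inf_relIndex_right]
      have hmul := Subgroup.relIndex_mul_relIndex (unitsIn F) (unitsIn F' ⊓ Γ) Γ
        (le_inf (unitsIn_mono hFF') hF) inf_le_right
      rw [hidx1, hi, pow_succ'] at hmul
      exact Nat.eq_of_mul_eq_mul_left hℓ.pos hmul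
    have hfin := ih F' _ le_sup_right hidx2
    have hFΓ : F ≤ IntermediateField.adjoin K (Units.val '' (Γ : Set (AlgebraicClosure K)ˣ)) :=
      le_of_unitsIn_le (hF.trans (le_unitsIn_adjoin Γ))
    have hF'Γ : F' ≤ IntermediateField.adjoin K (Units.val '' (Γ : Set (AlgebraicClosure K)ˣ)) := by
      rw [hF', hF1, IntermediateField.restrictScalars_adjoin_eq_sup]
      refine sup_le hFΓ ?_
      rw [IntermediateField.adjoin_le_iff, Set.singleton_subset_iff]
      exact le_unitsIn_adjoin Γ haΓ
    have hadj : IntermediateField.adjoin K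
          (Units.val '' ((Γ ⊔ unitsIn F' : Subgroup _) : Set (AlgebraicClosure K)ˣ)) =
        IntermediateField.adjoin K (Units.val '' (Γ : Set (AlgebraicClosure K)ˣ)) := by
      apply le_antisymm
      · rw [adjoin_val_le_iff]
        exact sup_le (le_unitsIn_adjoin Γ) (unitsIn_mono hF'Γ)
      · rw [adjoin_val_le_iff]
        exact le_sup_left.trans (le_unitsIn_adjoin _)
    rw [hadj] at hfin
    rw [← IntermediateField.relfinrank_mul_relfinrank hFF' hF'Γ, hdeg, hfin, pow_succ']

/-- Kneser's theorem, in the form where the radical group need not contain the base units. -/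
lemma kneser' {ℓ : ℕ} (hℓ : ℓ.Prime) (h2 : ℓ ≠ 2) {z : K} (hz : IsPrimitiveRoot z ℓ) (m : ℕ)
    (F : IntermediateField K (AlgebraicClosure K)) (Γ : Subgroup (AlgebraicClosure K)ˣ)
    (hm : (unitsIn F).relIndex Γ = ℓ ^ m) :
    IntermediateField.relfinrank F (IntermediateField.adjoin K
        (Units.val '' ((Γ ⊔ unitsIn F : Subgroup _) : Set (AlgebraicClosure K)ˣ))) = ℓ ^ m :=
  kneser hℓ h2 hz m F _ le_sup_right (by rw [Subgroup.relIndex_sup_right, hm])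

end KneserHelpers

/-- Remark 4.2: Theorem 4.1 still holds with `W_ℓ` replaced by `W'_ℓ := ⟨W_ℓ, ζ₄⟩`. -/
theorem stmt8 (K : Type*) [Field K] (ℓ : ℕ) (hℓ : ℓ.Prime) (hℓodd : Odd ℓ)
    (hchar : ringChar K ≠ ℓ) (hchar2 : ringChar K ≠ 2)
    (hζℓ : ∃ z : K, IsPrimitiveRoot z ℓ)
    (W : Subgroup (AlgebraicClosure K)ˣ)
    (hW : ∃ S : Set (AlgebraicClosure K)ˣ, S.Finite ∧
      (∀ x ∈ S, ∃ q : ℕ, q.Prime ∧ Odd q ∧ q ≠ ℓ ∧ q ≠ ringChar K ∧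
        IsPrimitiveRoot (x : AlgebraicClosure K) q) ∧ W = Subgroup.closure S)
    (Γℓ : Subgroup (AlgebraicClosure K)ˣ) (hΓK : baseUnits K ≤ Γℓ)
    (hidx : ∃ m : ℕ, Subgroup.relIndex (baseUnits K) Γℓ = ℓ ^ m)
    (ζ4 : (AlgebraicClosure K)ˣ) (hζ4 : IsPrimitiveRoot (ζ4 : AlgebraicClosure K) 4) :
    letI W' := W ⊔ Subgroup.closure {ζ4}
    IntermediateField.adjoin K (Units.val '' (Γℓ : Set (AlgebraicClosure K)ˣ)) ⊓
        IntermediateField.adjoin K (Units.val '' (W' : Set (AlgebraicClosure K)ˣ)) =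
      IntermediateField.adjoin K (Units.val ''
        ((Γℓ ⊓ unitsIn (IntermediateField.adjoin K
          (Units.val '' (W' : Set (AlgebraicClosure K)ˣ)))) : Set (AlgebraicClosure K)ˣ)) ∧
    Module.finrank K (IntermediateField.adjoin K
        (Units.val '' ((baseUnits K ⊔ W' ⊔ Γℓ) : Set (AlgebraicClosure K)ˣ))) *
      Subgroup.relIndex (baseUnits K) (Γℓ ⊓ unitsIn (IntermediateField.adjoin K
        (Units.val '' (W' : Set (AlgebraicClosure K)ˣ)))) =
    Subgroup.relIndex (baseUnits K) Γℓ *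
      Module.finrank K (IntermediateField.adjoin K
        (Units.val '' (W' : Set (AlgebraicClosure K)ˣ))) := by
  generalize W ⊔ Subgroup.closure {ζ4} = W'
  obtain ⟨z, hz⟩ := hζℓ
  obtain ⟨m, hm⟩ := hidx
  have h2 : ℓ ≠ 2 := by
    rintro rfl
    exact absurd hℓodd (by decide)
  set E := IntermediateField.adjoin K (Units.val '' (W' : Set (AlgebraicClosure K)ˣ)) with hE
  set L := IntermediateField.adjoin K (Units.val '' (Γℓ : Set (AlgebraicClosure K)ˣ)) with hL
  have hΓ'Γ : Γℓ ⊓ unitsIn E ≤ Γℓ := inf_le_left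
  have hbE : baseUnits K ≤ unitsIn E := by
    rw [← unitsIn_bot]
    exact unitsIn_mono bot_le
  have hbΓ' : baseUnits K ≤ Γℓ ⊓ unitsIn E := le_inf hΓK hbE
  -- the index of `Γ'` splits
  have hmul := Subgroup.relIndex_mul_relIndex (baseUnits K) (Γℓ ⊓ unitsIn E) Γℓ hbΓ' hΓ'Γ
  rw [hm] at hmul
  obtain ⟨s, -, hs⟩ := (Nat.dvd_prime_pow hℓ).1 (Dvd.intro _ hmul)
  obtain ⟨t, -, ht⟩ := (Nat.dvd_prime_pow hℓ).1 (Dvd.intro_left _ hmul)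
  have htE : (unitsIn E).relIndex Γℓ = ℓ ^ t := by
    rw [← Subgroup.inf_relIndex_right, inf_comm, ht]
  rw [hs, ht] at hmul
  -- degree over `K` of `K(Γ)` and `K(Γ')`
  have hdL : Module.finrank K L = ℓ ^ m := by
    have := kneser hℓ h2 hz m ⊥ Γℓ (by rwa [unitsIn_bot]) (by rwa [unitsIn_bot])
    rwa [IntermediateField.relfinrank_bot_left] at this
  have hdA : Module.finrank K (IntermediateField.adjoin K
      (Units.val '' ((Γℓ ⊓ unitsIn E : Subgroup _) : Set (AlgebraicClosure K)ˣ))) = ℓ ^ s := by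
    have := kneser hℓ h2 hz s ⊥ (Γℓ ⊓ unitsIn E) (by rwa [unitsIn_bot]) (by rwa [unitsIn_bot])
    rwa [IntermediateField.relfinrank_bot_left] at this
  constructor
  · have hle : IntermediateField.adjoin K
        (Units.val '' ((Γℓ ⊓ unitsIn E : Subgroup _) : Set (AlgebraicClosure K)ˣ)) ≤ L ⊓ E :=
      le_inf (adjoin_val_le_iff.2 (inf_le_left.trans (le_unitsIn_adjoin Γℓ)))
        (adjoin_val_le_iff.2 inf_le_right)
    have hidxLE : (unitsIn (L ⊓ E)).relIndex Γℓ = ℓ ^ t := by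
      have : unitsIn (L ⊓ E) ⊓ Γℓ = Γℓ ⊓ unitsIn E := by
        ext x
        constructor
        · rintro ⟨⟨-, h1⟩, h3⟩
          exact ⟨h3, h1⟩
        · rintro ⟨h1, h3⟩
          exact ⟨⟨le_unitsIn_adjoin Γℓ h1, h3⟩, h1⟩
      rw [← Subgroup.inf_relIndex_right, this, ht]
    have hk := kneser' hℓ h2 hz t (L ⊓ E) Γℓ hidxLE
    have hadj : IntermediateField.adjoin K
        (Units.val '' ((Γℓ ⊔ unitsIn (L ⊓ E) : Subgroup _) : Set (AlgebraicClosure K)ˣ)) = L := by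
      apply le_antisymm
      · rw [adjoin_val_le_iff]
        exact sup_le (le_unitsIn_adjoin Γℓ) (unitsIn_mono inf_le_left)
      · rw [hL, adjoin_val_le_iff]
        exact le_sup_left.trans (le_unitsIn_adjoin _)
    rw [hadj] at hk
    have htow := IntermediateField.finrank_bot_mul_relfinrank (inf_le_left : L ⊓ E ≤ L)
    rw [hk, hdL, ← hmul] at htow
    have hdLE := Nat.eq_of_mul_eq_mul_right (pow_pos hℓ.pos t) htow
    have : FiniteDimensional K ↥(L ⊓ E) :=
      FiniteDimensional.of_finrank_pos (by rw [hdLE]; exact pow_pos hℓ.pos s)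
    exact (IntermediateField.eq_of_le_of_finrank_eq hle (hdA.trans hdLE.symm)).symm
  · have hk := kneser' hℓ h2 hz t E Γℓ htE
    have hadj : IntermediateField.adjoin K
        (Units.val '' ((Γℓ ⊔ unitsIn E : Subgroup _) : Set (AlgebraicClosure K)ˣ)) =
        IntermediateField.adjoin K
        (Units.val '' ((baseUnits K ⊔ W' ⊔ Γℓ) : Set (AlgebraicClosure K)ˣ)) := by
      have hsub : ∀ x : (AlgebraicClosure K)ˣ,
          x ∈ ((baseUnits K ⊔ W' ⊔ Γℓ) : Set (AlgebraicClosure K)ˣ) →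
          x ∈ unitsIn (IntermediateField.adjoin K
            (Units.val '' ((baseUnits K ⊔ W' ⊔ Γℓ) : Set (AlgebraicClosure K)ˣ))) :=
        fun x hx => IntermediateField.subset_adjoin K _ ⟨x, hx, rfl⟩
      apply le_antisymm
      · rw [adjoin_val_le_iff]
        refine sup_le (fun x hx => hsub x (Or.inr hx)) (unitsIn_mono ?_)
        rw [hE, adjoin_val_le_iff]
        exact fun x hx => hsub x (Or.inl (Or.inr hx))
      · rw [IntermediateField.adjoin_le_iff]
        rintro _ ⟨x, (hx | hx) | hx, rfl⟩
        · exact le_unitsIn_adjoin (Γℓ ⊔ unitsIn E) (Subgroup.mem_sup_right (hbE hx))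
        · exact le_unitsIn_adjoin (Γℓ ⊔ unitsIn E)
            (Subgroup.mem_sup_right (le_unitsIn_adjoin W' hx))
        · exact le_unitsIn_adjoin (Γℓ ⊔ unitsIn E) (Subgroup.mem_sup_left hx)
    have hEM : E ≤ IntermediateField.adjoin K
        (Units.val '' ((Γℓ ⊔ unitsIn E : Subgroup _) : Set (AlgebraicClosure K)ˣ)) :=
      le_of_unitsIn_le (le_sup_right.trans (le_unitsIn_adjoin _))
    have htow := IntermediateField.finrank_bot_mul_relfinrank hEM
    rw [hk, hadj] at htow
    have hfinal : Module.finrank K (IntermediateField.adjoin K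
        (Units.val '' ((baseUnits K ⊔ W' ⊔ Γℓ) : Set (AlgebraicClosure K)ˣ))) *
        Subgroup.relIndex (baseUnits K) (Γℓ ⊓ unitsIn E) =
        Subgroup.relIndex (baseUnits K) Γℓ * Module.finrank K E := by
      rw [← htow, hs, hm, ← hmul]
      ring
    exact hfinal

end
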